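/- Let n = 2k−1 ≥ 3 be odd and let p and q be odd integers ≥ 2 that are relatively prime. Then for every choice of parameters ℓ₁,…,ℓ_k (each coprime to p) and ℓ'₁,…,ℓ'_k (each coprime to q), cat(L^n_p(ℓ₁,…,ℓ_k) × L^n_q(ℓ'₁,…,ℓ'_k)) ≤ 2n − 2. -/

import Mathlib

open scoped Topology

/-- The Lusternik–Schnirelmann category of a space (normalized so that contractible spaces
have category 0): the least `k` such that `X` admits an open cover by `k+1` sets, each of
which has nullhomotopic inclusion into `X` (i.e. is contractible in `X`). -/
noncomputable def lsCat (X : Type*) [TopologicalSpace X] : ℕ :=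
  sInf {k : ℕ | ∃ U : Fin (k + 1) → Set X,
    (∀ i, IsOpen (U i)) ∧ (⋃ i, U i) = Set.univ ∧
    ∀ i, ContinuousMap.Nullhomotopic
      (⟨Subtype.val, continuous_subtype_val⟩ : C(U i, X))}

/-- The orbit relation on the unit sphere of `ℂ^k` defining the lens space
`L^{2k-1}_p(ℓ₁,…,ℓ_k)`: a fixed generator of `ℤ/p` acts coordinatewise by
`z_j ↦ exp(2πiℓ_j/p) z_j`, and `m` ranges over the powers of this generator. -/
def lensRel (p k : ℕ) (ℓ : Fin k → ℤ) :
    Metric.sphere (0 : EuclideanSpace ℂ (Fin k)) 1 →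
      Metric.sphere (0 : EuclideanSpace ℂ (Fin k)) 1 → Prop :=
  fun x y => ∃ m : ℤ, ∀ j : Fin k,
    (y.1 j) = Complex.exp (2 * Real.pi * Complex.I * m * ℓ j / p) * (x.1 j)

/-- The lens space `L^{2k-1}_p(ℓ₁,…,ℓ_k)`: the orbit space of the free linear action of `ℤ/p`
on the unit sphere `S^{2k-1} ⊆ ℂ^k` determined by the parameters `ℓ`, with the quotient
topology. -/
noncomputable def LensSpace (p k : ℕ) (ℓ : Fin k → ℤ) : Type :=
  Quot (lensRel p k ℓ)

noncomputable instance (p k : ℕ) (ℓ : Fin k → ℤ) : TopologicalSpace (LensSpace p k ℓ) :=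
  inferInstanceAs (TopologicalSpace (Quot (lensRel p k ℓ)))

/-!
Let `π : S × S → X × Y` be the quotient map from the product of two copies `S` of the sphere to the
product of the lens spaces. A point can be removed from each factor of `S × S` to leave a
contractible set, so it suffices to cover `X × Y` by images of open sets on which `π` is injective,
each missing a point in both factors.

After replacing the weights by `1, …, 1`, consider the Hermitian product `F₀(x, y)` and the sums
`F_c(x, y)` of the minors `x_a y_b - x_b y_a` with `a + b = c`, for `0 < c < 2k - 2`. At every
point some `F_c` is nonzero. Deck transformations multiply `F_c` by `pq`-th roots of unity, and
because `p` and `q` are coprime each such root comes from exactly one of them. Hence `π` is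
injective where `F_c` takes values in a sector of opening `2π/(pq)`, and two such sectors for each
of the `2k - 2` forms give `4k - 4` sheets whose images cover. Removing a point from each factor
of a sheet loses the points of the sheet over two small sets; the lost parts are gathered in one
more sheet. On it `π` stays injective because the small sets can be placed near points `z₀` and
`w₀` such that all the sheets avoid `(z₀, w₀)` and its translates in the second factor.
-/

section LSCategory

variable {X Y : Type*} [TopologicalSpace X] [TopologicalSpace Y]

/-- A subset is contractible in the ambient space if its inclusion is nullhomotopic; these are
the sheets of the covers that compute `lsCat`. -/
def IsContractibleIn (U : Set X) : Prop :=
  ContinuousMap.Nullhomotopic (⟨Subtype.val, continuous_subtype_val⟩ : C(U, X))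

theorem IsContractibleIn.mono {U V : Set X} (hV : IsContractibleIn V) (hUV : U ⊆ V) :
    IsContractibleIn U :=
  hV.comp_left ⟨Set.inclusion hUV, continuous_inclusion hUV⟩

theorem isContractibleIn_of_contractibleSpace (U : Set X) [ContractibleSpace U] :
    IsContractibleIn U :=
  (id_nullhomotopic U).comp_right ⟨Subtype.val, continuous_subtype_val⟩

theorem IsContractibleIn.prod {U : Set X} {V : Set Y} (hU : IsContractibleIn U)
    (hV : IsContractibleIn V) : IsContractibleIn (U ×ˢ V) := by
  obtain ⟨x, hx⟩ := hU.comp_left (⟨fun z ↦ ⟨z.1.1, z.2.1⟩, by fun_prop⟩ : C(↥(U ×ˢ V), U))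
  obtain ⟨y, hy⟩ := hV.comp_left (⟨fun z ↦ ⟨z.1.2, z.2.2⟩, by fun_prop⟩ : C(↥(U ×ˢ V), V))
  exact ⟨(x, y), hx.prodMk hy⟩

theorem IsContractibleIn.image {π : X → Y} (hπ : Continuous π) (hπo : IsOpenMap π) {V : Set X}
    (hVo : IsOpen V) (hinj : V.InjOn π) (hV : IsContractibleIn V) :
    IsContractibleIn (π '' V) := by
  have hemb : Topology.IsOpenEmbedding (V.domRestrict π) :=
    .of_continuous_injective_isOpenMap (hπ.comp continuous_subtype_val) hinj.injective
      (hπo.domRestrict hVo)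
  let e : V ≃ₜ π '' V :=
    hemb.isEmbedding.toHomeomorph.trans (.setCongr (Set.range_domRestrict π V))
  have hval : (⟨Subtype.val, continuous_subtype_val⟩ : C(π '' V, Y)) =
      .comp (.comp ⟨π, hπ⟩ ⟨Subtype.val, continuous_subtype_val⟩) (e.symm : C(π '' V, V)) :=
    ContinuousMap.ext fun y ↦ congrArg Subtype.val (e.apply_symm_apply y).symm
  rw [IsContractibleIn, hval]
  exact (hV.comp_right ⟨π, hπ⟩).comp_left (e.symm : C(π '' V, V))

theorem lsCat_le_of_cover {ι : Type*} [Fintype ι] {m : ℕ} (hm : Fintype.card ι = m + 1)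
    (U : ι → Set X) (hUo : ∀ i, IsOpen (U i)) (hU : ⋃ i, U i = Set.univ)
    (hUc : ∀ i, IsContractibleIn (U i)) : lsCat X ≤ m := by
  let e := (Fintype.equivFinOfCardEq hm).symm
  exact Nat.sInf_le ⟨U ∘ e, fun i ↦ hUo (e i), (e.surjective.iUnion_comp U).trans hU,
    fun i ↦ hUc (e i)⟩

end LSCategory

theorem exists_pairwise_disjoint_isOpen_subset {X : Type*} [TopologicalSpace X] [T2Space X]
    {O : Set X} (hO : IsOpen O) (hinf : O.Infinite) (ι : Type*) [Countable ι] :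
    ∃ B : ι → Set X, (∀ i, IsOpen (B i)) ∧ (∀ i, (B i).Nonempty) ∧ (∀ i, B i ⊆ O) ∧
      Pairwise (Function.onFun Disjoint B) := by
  have := hinf.to_subtype
  obtain ⟨B, hB, hBo, hdisj⟩ := exists_seq_infinite_isOpen_pairwise_disjoint O
  obtain ⟨f, hf⟩ := Countable.exists_injective_nat ι
  refine ⟨fun i ↦ Subtype.val '' B (f i), fun i ↦ hO.isOpenMap_subtype_val _ (hBo _),
    fun i ↦ (hB _).nonempty.image _, fun i ↦ Subtype.coe_image_subset O _, fun i j hij ↦ ?_⟩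
  exact (Set.disjoint_image_iff Subtype.val_injective).2 (hdisj (hf.ne hij))

section SpareSheet

variable {S T X Y ι : Type*} {f : S → X} {g : T → Y} {W : ι → Set (S × T)}
  {O : Set S} {O' : Set T} {B : ι → Set S} {B' : ι → Set T}

/-- The extra sheet formed by the parts of the sheets `W i` that lie over `B i` in the first
factor or over `B' i` in the second. -/
def spareSheet (W : ι → Set (S × T)) (B : ι → Set S) (B' : ι → Set T) : Set (S × T) :=
  ⋃ i, W i ∩ (B i ×ˢ Set.univ ∪ Set.univ ×ˢ B' i)

theorem mem_spareSheet {x : S × T} :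
    x ∈ spareSheet W B B' ↔ ∃ i, x ∈ W i ∧ (x.1 ∈ B i ∨ x.2 ∈ B' i) := by
  simp [spareSheet]

theorem isOpen_spareSheet [TopologicalSpace S] [TopologicalSpace T] (hW : ∀ i, IsOpen (W i))
    (hB : ∀ i, IsOpen (B i)) (hB' : ∀ i, IsOpen (B' i)) : IsOpen (spareSheet W B B') :=
  isOpen_iUnion fun i ↦ (hW i).inter
    (((hB i).prod isOpen_univ).union (isOpen_univ.prod (hB' i)))

theorem spareSheet_subset_compl_prod_compl {s : S} {t : T}
    (hsep : ∀ i z w w', (z, w) ∈ W i → z ∈ O → w' ∈ O' → g w ≠ g w')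
    (hB : ∀ i, B i ⊆ O) (hB' : ∀ i, B' i ⊆ O') (hs : s ∈ O) (ht : t ∈ O')
    (hsB : ∀ i, s ∉ B i) (htB' : ∀ i, t ∉ B' i) :
    spareSheet W B B' ⊆ {s}ᶜ ×ˢ {t}ᶜ := by
  intro x hx
  obtain ⟨i, hxW, hxB⟩ := mem_spareSheet.1 hx
  have hxO : x.1 ∈ O → x.2 ∉ O' := fun h h' ↦ hsep i _ _ _ hxW h h' rfl
  rcases hxB with hxB | hxB
  · exact ⟨fun h ↦ hsB i (h ▸ hxB), fun h ↦ hxO (hB i hxB) (h ▸ ht)⟩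
  · exact ⟨fun h ↦ hxO (h ▸ hs) (hB' i hxB), fun h ↦ htB' i (h ▸ hxB)⟩

theorem injOn_spareSheet (hinj : ∀ i, (W i).InjOn (Prod.map f g)) (hf : O.InjOn f)
    (hg : O'.InjOn g) (hsep : ∀ i z w w', (z, w) ∈ W i → z ∈ O → w' ∈ O' → g w ≠ g w')
    (hB : ∀ i, B i ⊆ O) (hB' : ∀ i, B' i ⊆ O') (hBd : Pairwise (Function.onFun Disjoint B))
    (hBd' : Pairwise (Function.onFun Disjoint B')) :
    (spareSheet W B B').InjOn (Prod.map f g) := by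
  intro x hx y hy hxy
  obtain ⟨i, hxW, hxB⟩ := mem_spareSheet.1 hx
  obtain ⟨j, hyW, hyB⟩ := mem_spareSheet.1 hy
  obtain ⟨hfxy, hgxy⟩ := Prod.mk.inj hxy
  suffices i = j by subst this; exact hinj i hxW hyW hxy
  rcases hxB with hxB | hxB <;> rcases hyB with hyB | hyB
  · exact hBd.eq (Set.not_disjoint_iff.2
      ⟨x.1, hxB, hf (hB i hxB) (hB j hyB) hfxy ▸ hyB⟩)
  · exact absurd hgxy (hsep i _ _ _ hxW (hB i hxB) (hB' j hyB))
  · exact absurd hgxy.symm (hsep j _ _ _ hyW (hB j hyB) (hB' i hxB))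
  · exact hBd'.eq (Set.not_disjoint_iff.2
      ⟨x.2, hxB, hg (hB' i hxB) (hB' j hyB) hgxy ▸ hyB⟩)

theorem iUnion_subset_spareSheet_union {s : ι → S} {t : ι → T} (hs : ∀ i, s i ∈ B i)
    (ht : ∀ i, t i ∈ B' i) :
    ⋃ i, W i ⊆ spareSheet W B B' ∪ ⋃ i, W i ∩ {s i}ᶜ ×ˢ {t i}ᶜ := by
  refine Set.iUnion_subset fun i x hx ↦ ?_
  by_cases hst : x.1 = s i ∨ x.2 = t i
  · exact .inl (mem_spareSheet.2 ⟨i, hx, hst.imp (fun h : x.1 = s i ↦ h ▸ hs i)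
      (fun h : x.2 = t i ↦ h ▸ ht i)⟩)
  · exact .inr (Set.mem_iUnion.2 ⟨i, hx, not_or.1 hst⟩)

variable [TopologicalSpace S] [TopologicalSpace T] [TopologicalSpace X] [TopologicalSpace Y]
  [Fintype ι]

theorem lsCat_prod_le_of_injOn_cover {m : ℕ} (hm : Fintype.card ι = m + 1)
    (hS : ∀ s : S, IsContractibleIn {s}ᶜ) (hT : ∀ t : T, IsContractibleIn {t}ᶜ)
    (hf : IsOpenQuotientMap f) (hg : IsOpenQuotientMap g)
    {V : ι → Set (S × T)} {s : ι → S} {t : ι → T} (hV : ∀ i, IsOpen (V i))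
    (hinj : ∀ i, (V i).InjOn (Prod.map f g)) (hst : ∀ i, V i ⊆ {s i}ᶜ ×ˢ {t i}ᶜ)
    (hcover : ⋃ i, Prod.map f g '' V i = Set.univ) : lsCat (X × Y) ≤ m := by
  have hfg := hf.prodMap hg
  exact lsCat_le_of_cover hm _ (fun i ↦ hfg.isOpenMap _ (hV i)) hcover fun i ↦
    .image hfg.continuous hfg.isOpenMap (hV i) (hinj i) (((hS _).prod (hT _)).mono (hst i))

theorem lsCat_prod_le_card [T2Space S] [T2Space T]
    (hS : ∀ s : S, IsContractibleIn {s}ᶜ) (hT : ∀ t : T, IsContractibleIn {t}ᶜ)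
    (hf : IsOpenQuotientMap f) (hg : IsOpenQuotientMap g)
    (hO : IsOpen O) (hOinf : O.Infinite) (hfO : O.InjOn f)
    (hO' : IsOpen O') (hOinf' : O'.Infinite) (hgO' : O'.InjOn g)
    (hW : ∀ i, IsOpen (W i)) (hinj : ∀ i, (W i).InjOn (Prod.map f g))
    (hcover : ⋃ i, Prod.map f g '' W i = Set.univ)
    (hsep : ∀ i z w w', (z, w) ∈ W i → z ∈ O → w' ∈ O' → g w ≠ g w') :
    lsCat (X × Y) ≤ Fintype.card ι := by
  obtain ⟨B, hBo, hBne, hBO, hBd⟩ :=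
    exists_pairwise_disjoint_isOpen_subset hO hOinf (Option ι)
  obtain ⟨B', hBo', hBne', hBO', hBd'⟩ :=
    exists_pairwise_disjoint_isOpen_subset hO' hOinf' (Option ι)
  choose s hs using hBne
  choose t ht using hBne'
  let spare := spareSheet W (fun i ↦ B (some i)) (fun i ↦ B' (some i))
  have hspare : spare ⊆ {s none}ᶜ ×ˢ {t none}ᶜ :=
    spareSheet_subset_compl_prod_compl hsep (fun i ↦ hBO i) (fun i ↦ hBO' i)
      (hBO none (hs none)) (hBO' none (ht none))
      (fun i h ↦ (hBd (Option.some_ne_none i)).notMem_of_mem_left h (hs none))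
      (fun i h ↦ (hBd' (Option.some_ne_none i)).notMem_of_mem_left h (ht none))
  have hinj_spare : spare.InjOn (Prod.map f g) :=
    injOn_spareSheet hinj hfO hgO' hsep (fun i ↦ hBO i) (fun i ↦ hBO' i)
      (hBd.comp_of_injective (Option.some_injective ι))
      (hBd'.comp_of_injective (Option.some_injective ι))
  let V : Option ι → Set (S × T) :=
    Option.rec spare fun i ↦ W i ∩ {s (some i)}ᶜ ×ˢ {t (some i)}ᶜ
  refine lsCat_prod_le_of_injOn_cover (V := V) Fintype.card_option hS hT hf hg
    (Option.rec (isOpen_spareSheet hW (fun i ↦ hBo i) (fun i ↦ hBo' i))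
      fun i ↦ (hW i).inter (isOpen_compl_singleton.prod isOpen_compl_singleton))
    (Option.rec hinj_spare fun i ↦ (hinj i).mono Set.inter_subset_left)
    (Option.rec hspare fun i ↦ Set.inter_subset_right) ?_
  rw [Set.iUnion_option, ← Set.univ_subset_iff, ← hcover, ← Set.image_iUnion, ← Set.image_iUnion,
    ← Set.image_union]
  exact Set.image_mono (iUnion_subset_spareSheet_union (fun i ↦ hs i) (fun i ↦ ht i))

end SpareSheet

theorem isContractibleIn_compl_singleton_sphere {E : Type*} [NormedAddCommGroup E]
    [InnerProductSpace ℝ E] (v : Metric.sphere (0 : E) 1) : IsContractibleIn {v}ᶜ := by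
  have e := (stereographic (norm_eq_of_mem_sphere v)).toHomeomorphSourceTarget
  rw [stereographic_source, stereographic_target] at e
  have := (e.trans (Homeomorph.Set.univ _)).contractibleSpace
  exact isContractibleIn_of_contractibleSpace _

theorem infinite_of_isOpen_sphere {E : Type*} [NormedAddCommGroup E] [NormedSpace ℝ E]
    (hE : 1 < Module.rank ℝ E) {O : Set (Metric.sphere (0 : E) 1)} (hO : IsOpen O)
    (hne : O.Nonempty) : O.Infinite := by
  obtain ⟨x, hx⟩ := hne
  have := Subtype.connectedSpace (isConnected_sphere hE 0 zero_le_one)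
  have : Nontrivial (Metric.sphere (0 : E) 1) := ⟨x, -x, ne_neg_of_mem_unit_sphere ℝ x⟩
  have := ConnectedSpace.neBot_nhdsWithin_compl_of_nontrivial_of_t1space x
  exact infinite_of_mem_nhds x (hO.mem_nhds hx)

theorem one_lt_rank_real_of_complex (E : Type*) [AddCommGroup E] [Module ℂ E]
    [FiniteDimensional ℂ E] [Nontrivial E] : 1 < Module.rank ℝ E := by
  have := Module.finrank_pos (R := ℂ) (M := E)
  exact Module.one_lt_rank_of_one_lt_finrank (by rw [finrank_real_of_complex]; lia)

section ArgSector

open Complex InnerProductGeometry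

/-- The open sector of nonzero complex numbers whose principal argument differs from `c` by less
than `r`. It stops at the negative real axis: there is no wrapping modulo `2π`. -/
def argSector (c r : ℝ) : Set ℂ := {v | v ≠ 0 ∧ |arg v - c| < r}

theorem isOpen_argSector {c r : ℝ} (h : c + r ≤ Real.pi) : IsOpen (argSector c r) := by
  refine isOpen_iff_mem_nhds.2 fun v ⟨hv, hvr⟩ ↦ ?_
  have hslit : v ∈ slitPlane :=
    mem_slitPlane_iff_arg.2 ⟨by linarith [(abs_lt.1 hvr).2] |> ne_of_lt, hv⟩
  filter_upwards [isOpen_ne.mem_nhds hv,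
    ((continuousAt_arg hslit).sub_const c).abs.eventually (Iio_mem_nhds hvr)] with w hw hwr
  exact ⟨hw, hwr⟩

theorem eq_of_pow_eq_of_mem_argSector {N : ℕ} (hN : N ≠ 0) {c r : ℝ} (hr : r ≤ Real.pi / N)
    {v w : ℂ} (hv : v ∈ argSector c r) (hw : w ∈ argSector c r) (h : v ^ N = w ^ N) : v = w := by
  have hN' : (0 : ℝ) < N := by positivity
  have hnorm : ‖v‖ = ‖w‖ := by
    rw [← pow_left_inj₀ (norm_nonneg v) (norm_nonneg w) hN, ← norm_pow, ← norm_pow, h]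
  have hangle : ((N * arg v : ℝ) : Real.Angle) = (N * arg w : ℝ) := by
    rw [← nsmul_eq_mul, ← nsmul_eq_mul, Real.Angle.coe_nsmul, Real.Angle.coe_nsmul,
      ← arg_pow_coe_angle, ← arg_pow_coe_angle, h]
  obtain ⟨m, hm⟩ := Real.Angle.angle_eq_iff_two_pi_dvd_sub.1 hangle
  have hlt : |2 * Real.pi * m| < 2 * Real.pi := by
    rw [← hm, ← mul_sub, abs_mul, abs_of_pos hN']
    rw [le_div_iff₀ hN'] at hr
    have : |arg v - arg w| < 2 * r := by
      have := abs_sub_le (arg v) c (arg w)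
      rw [abs_sub_comm c] at this
      linarith [hv.2, hw.2]
    nlinarith
  have hm0 : m = 0 := by
    rw [abs_mul, abs_of_pos Real.two_pi_pos] at hlt
    have : |m| < 1 := by exact_mod_cast (mul_lt_iff_lt_one_right Real.two_pi_pos).1 hlt
    exact Int.abs_lt_one_iff.1 this
  refine Complex.ext_norm_arg hnorm ?_
  rw [hm0, Int.cast_zero, mul_zero, ← mul_sub, mul_eq_zero, sub_eq_zero] at hm
  exact hm.resolve_left hN'.ne'

theorem abs_arg_mul_le (v w : ℂ) : |arg (v * w)| ≤ |arg v| + |arg w| := by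
  rcases eq_or_ne v 0 with rfl | hv
  · simp
  rcases eq_or_ne w 0 with rfl | hw
  · simp
  calc |arg (v * w)| = angle (v * w) 1 := (angle_one_right (mul_ne_zero hv hw)).symm
    _ ≤ angle (v * w) (1 * w) + angle (1 * w) 1 := angle_le_angle_add_angle _ _ _
    _ = |arg v| + |arg w| := by
      rw [angle_mul_right hw, one_mul, angle_one_right hv, angle_one_right hw]

theorem abs_arg_pow_le (v : ℂ) (n : ℕ) : |arg (v ^ n)| ≤ n * |arg v| := by
  induction n with
  | zero => simp
  | succ n ih =>
    rw [pow_succ, Nat.cast_succ, add_one_mul]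
    exact (abs_arg_mul_le _ _).trans (by gcongr)

theorem isOpen_setOf_lt_abs_arg {r : ℝ} (hr : 0 ≤ r) : IsOpen {v : ℂ | r < |arg v|} := by
  refine isOpen_iff_mem_nhds.2 fun v hv ↦ ?_
  have hv0 : v ≠ 0 := by rintro rfl; simp [hr.not_gt] at hv
  have hcont : ContinuousAt (fun w : ℂ ↦ angle w 1) v :=
    (continuousAt_angle hv0 one_ne_zero).comp (f := fun w : ℂ ↦ (w, (1 : ℂ))) (by fun_prop)
  filter_upwards [isOpen_ne.mem_nhds hv0, hcont.eventually
    (Ioi_mem_nhds ((angle_one_right hv0).symm ▸ hv : r < angle v 1))] with w hw hwr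
  rwa [angle_one_right hw] at hwr

theorem exists_pow_eq_arg_eq {N : ℕ} (hN : N ≠ 0) (v : ℂ) :
    ∃ w : ℂ, w ^ N = v ∧ arg w = arg v / N := by
  refine ⟨v ^ (N⁻¹ : ℂ), cpow_nat_inv_pow v hN, ?_⟩
  rcases eq_or_ne v 0 with rfl | hv
  · rw [zero_cpow (inv_ne_zero (Nat.cast_ne_zero.2 hN)), arg_zero, zero_div]
  have him : (log v * (N : ℂ)⁻¹).im = arg v / N := by
    rw [← ofReal_natCast, ← ofReal_inv, im_mul_ofReal, log_im, div_eq_mul_inv]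
  have habs : |arg v / N| ≤ |arg v| := by
    rw [abs_div, Nat.abs_cast]
    exact div_le_self (abs_nonneg _) (mod_cast Nat.one_le_iff_ne_zero.2 hN)
  have hlower : -Real.pi < arg v / N := by
    rcases le_or_gt 0 (arg v) with h | h
    · exact (neg_neg_of_pos Real.pi_pos).trans_le (by positivity)
    · rw [abs_of_neg h] at habs
      linarith [neg_abs_le (arg v / N), neg_pi_lt_arg v]
  rw [cpow_def_of_ne_zero hv, ← log_im, log_exp (him ▸ hlower)
    (him ▸ (le_abs_self _).trans (habs.trans (abs_arg_le_pi v))), him]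

/-- Two overlapping open sectors of opening angle `2π/N`. Together they contain an `N`-th root of
every nonzero complex number, whereas one open sector would miss the roots on its boundary. The
shift by `π/(2N)` is kept small so that both sectors stay close to the positive real axis. -/
def rootSector (N : ℕ) (ε : Bool) : Set ℂ :=
  argSector (bif ε then Real.pi / (2 * N) else 0) (Real.pi / N)

theorem isOpen_rootSector {N : ℕ} (hN : 2 ≤ N) (ε : Bool) : IsOpen (rootSector N ε) := by
  have hN' : (2 : ℝ) ≤ N := mod_cast hN
  have hle : Real.pi / N ≤ Real.pi / 2 := by gcongr
  have hle' : Real.pi / (2 * N) ≤ Real.pi / (2 * 2) := by gcongr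
  cases ε <;> exact isOpen_argSector (by simp only [cond_true, cond_false]; linarith [Real.pi_pos])

theorem exists_pow_eq_pow_mem_rootSector {N : ℕ} (hN : N ≠ 0) {v : ℂ} (hv : v ≠ 0) :
    ∃ w ε, w ^ N = v ^ N ∧ w ∈ rootSector N ε := by
  obtain ⟨w, hw, harg⟩ := exists_pow_eq_arg_eq hN (v ^ N)
  have hw0 : w ≠ 0 := by
    rintro rfl
    exact pow_ne_zero N hv (by rw [← hw, zero_pow hN])
  have hN' : (0 : ℝ) < N := by positivity
  obtain h | h := (arg_le_pi (v ^ N)).lt_or_eq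
  · refine ⟨w, false, hw, hw0, ?_⟩
    rw [harg, cond_false, sub_zero, abs_div, abs_of_pos hN']
    gcongr
    exact abs_lt.2 ⟨neg_pi_lt_arg _, h⟩
  · refine ⟨w, true, hw, hw0, ?_⟩
    have : Real.pi / N - Real.pi / (2 * N) = Real.pi / N / 2 := by field_simp; norm_num
    rw [harg, h, cond_true, this, abs_of_pos (by positivity)]
    exact half_lt_self (by positivity)

theorem abs_arg_lt_of_mem_rootSector {N : ℕ} {ε : Bool} {v : ℂ} (hv : v ∈ rootSector N ε) :
    |arg v| < 3 * Real.pi / (2 * N) := by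
  have hshift : |bif ε then Real.pi / (2 * N) else 0| ≤ Real.pi / (2 * N) := by
    have : 0 ≤ Real.pi / (2 * N) := by positivity
    cases ε
    · rwa [cond_false, abs_zero]
    · rw [cond_true, abs_of_nonneg this]
  have hsum : Real.pi / N + Real.pi / (2 * N) = 3 * Real.pi / (2 * N) := by
    ring
  linarith [hv.2, abs_sub_abs_le_abs_sub (arg v) (bif ε then Real.pi / (2 * N) else 0)]

theorem abs_arg_pow_le_of_mem_rootSector {p q : ℕ} (hp : 2 ≤ p) (hq : q ≠ 0) {ε : Bool} {v : ℂ}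
    (hv : v ∈ rootSector (p * q) ε) : |arg (v ^ q)| ≤ 3 * Real.pi / 4 := by
  have hp' : (2 : ℝ) ≤ p := mod_cast hp
  calc |arg (v ^ q)| ≤ q * |arg v| := abs_arg_pow_le v q
    _ ≤ q * (3 * Real.pi / (2 * (p * q : ℕ))) := by
      gcongr; exact (abs_arg_lt_of_mem_rootSector hv).le
    _ = 3 * Real.pi / (2 * p) := by push_cast; field_simp
    _ ≤ 3 * Real.pi / (2 * 2) := by gcongr
    _ = 3 * Real.pi / 4 := by norm_num

end ArgSector

section MinorSum

variable {R : Type*} [CommRing R] {k : ℕ} {x y : Fin k → R}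

/-- The `2 × 2` minor in columns `a`, `b` of the matrix with rows `x` and `y`. -/
def minor (x y : Fin k → R) (a b : Fin k) : R := x a * y b - x b * y a

/-- The sum of all `2 × 2` minors of the matrix with rows `x` and `y` whose column indices add up
to `c`. -/
def minorSum (c : ℕ) (x y : Fin k → R) : R :=
  ∑ ab : Fin k × Fin k with ab.1 < ab.2 ∧ (ab.1 + ab.2 : ℕ) = c, minor x y ab.1 ab.2

theorem minor_self (x y : Fin k → R) (a : Fin k) : minor x y a a = 0 := by
  rw [minor, mul_comm, sub_self]

theorem minor_smul_smul (r s : R) (x y : Fin k → R) (a b : Fin k) :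
    minor (r • x) (s • y) a b = r * s * minor x y a b := by
  simp only [minor, Pi.smul_apply, smul_eq_mul]
  ring

theorem minorSum_smul_smul (c : ℕ) (r s : R) (x y : Fin k → R) :
    minorSum c (r • x) (s • y) = r * s * minorSum c x y := by
  simp only [minorSum, minor_smul_smul, Finset.mul_sum]

theorem minor_eq_zero_of_minor_eq_zero [NoZeroDivisors R] {i a b : Fin k}
    (hi : x i ≠ 0 ∨ y i ≠ 0) (ha : minor x y i a = 0) (hb : minor x y i b = 0) :
    minor x y a b = 0 := by
  simp only [minor] at *
  rcases hi with hi | hi <;> refine (mul_eq_zero.1 ?_).resolve_left hi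
  · linear_combination x a * hb - x b * ha
  · linear_combination y a * hb - y b * ha

/-- If `(i, j)` is lexicographically the first pair with a nonzero minor, every other minor with the
same column sum vanishes, so nothing cancels in the sum. -/
theorem minorSum_add_eq_minor [NoZeroDivisors R] {i j : Fin k} (hij : i < j)
    (hi : x i ≠ 0 ∨ y i ≠ 0) (hlow : ∀ a < i, x a = 0 ∧ y a = 0)
    (hj : ∀ b < j, minor x y i b = 0) : minorSum (i + j) x y = minor x y i j := by
  refine Finset.sum_eq_single (i, j) (fun ⟨a, b⟩ hab hne ↦ ?_) fun h ↦ ?_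
  · obtain ⟨hlt, hsum⟩ : a < b ∧ (a + b : ℕ) = i + j := by simpa using hab
    have hai : a ≠ i := by
      rintro rfl
      exact hne (Prod.ext rfl (Fin.ext (by simpa using hsum)))
    rcases hai.lt_or_gt with hai | hai
    · simp only [minor, hlow a hai, zero_mul, mul_zero, sub_zero]
    · have hbj : b < j := by lia
      exact minor_eq_zero_of_minor_eq_zero hi (hj a (hlt.trans hbj)) (hj b hbj)
  · simp [hij] at h

theorem minor_eq_zero_of_minorSum_eq_zero [NoZeroDivisors R] (h : ∀ c, minorSum c x y = 0)
    (a b : Fin k) : minor x y a b = 0 := by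
  by_cases hxy : ∃ i, x i ≠ 0 ∨ y i ≠ 0
  · obtain ⟨i, hi⟩ := exists_minimal_of_wellFoundedLT _ hxy
    have hlow (a : Fin k) (ha : a < i) : x a = 0 ∧ y a = 0 := by
      simpa using hi.not_prop_of_lt ha
    have hmin (j : Fin k) : minor x y i j = 0 := by
      induction j using WellFoundedLT.induction with
      | ind j ih =>
        rcases lt_trichotomy i j with hij | rfl | hij
        · rw [← minorSum_add_eq_minor hij hi.prop hlow ih, h]
        · exact minor_self x y i
        · simp only [minor, hlow j hij, zero_mul, mul_zero, sub_zero]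
    exact minor_eq_zero_of_minor_eq_zero hi.prop (hmin a) (hmin b)
  · simp only [not_exists, not_or, not_not] at hxy
    simp only [minor, hxy, zero_mul, sub_zero]

theorem lt_of_minorSum_ne_zero {c : ℕ} (h : minorSum c x y ≠ 0) : 0 < c ∧ c < 2 * k - 2 := by
  obtain ⟨⟨a, b⟩, hab, -⟩ := Finset.exists_ne_zero_of_sum_ne_zero h
  simp only [Finset.mem_filter_univ] at hab
  lia

theorem exists_eq_smul_of_minorSum_eq_zero {K : Type*} [Field K] {x y : Fin k → K} (hx : x ≠ 0)
    (h : ∀ c, minorSum c x y = 0) : ∃ r : K, y = r • x := by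
  obtain ⟨i, hi⟩ := Function.ne_iff.1 hx
  refine ⟨y i / x i, funext fun j ↦ ?_⟩
  have hij := minor_eq_zero_of_minorSum_eq_zero h i j
  rw [minor, sub_eq_zero] at hij
  rw [Pi.smul_apply, smul_eq_mul, div_mul_eq_mul_div, eq_div_iff hi]
  linear_combination hij

end MinorSum

section LensForm

open Matrix ComplexOrder

variable {k : ℕ}

/-- The forms that detect the sheets of a product of two lens spaces: the Hermitian product of
`x` and `y` for `c = 0` and the sum of the minors of total column index `c` for `c > 0`. -/
def lensForm : ℕ → (Fin k → ℂ) → (Fin k → ℂ) → ℂ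
  | 0, x, y => x ⬝ᵥ star y
  | c + 1, x, y => minorSum (c + 1) x y

/-- `lensForm c` is semilinear in its second argument with respect to `formTwist c`. -/
def formTwist : ℕ → ℂ →+* ℂ
  | 0 => starRingEnd ℂ
  | _ + 1 => RingHom.id ℂ

theorem formTwist_formTwist (c : ℕ) (v : ℂ) : formTwist c (formTwist c v) = v := by
  cases c with
  | zero => exact Complex.conj_conj v
  | succ c => rfl

theorem lensForm_smul_smul (c : ℕ) (r s : ℂ) (x y : Fin k → ℂ) :
    lensForm c (r • x) (s • y) = r * formTwist c s * lensForm c x y := by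
  cases c with
  | zero =>
    rw [lensForm, star_smul, smul_dotProduct, dotProduct_smul, smul_eq_mul, smul_eq_mul, mul_assoc]
    rfl
  | succ c => exact minorSum_smul_smul (c + 1) r s x y

theorem continuous_lensForm (c : ℕ) :
    Continuous fun xy : (Fin k → ℂ) × (Fin k → ℂ) ↦ lensForm c xy.1 xy.2 := by
  cases c with
  | zero => unfold lensForm; fun_prop
  | succ c => unfold lensForm minorSum minor; fun_prop

theorem exists_lensForm_ne_zero (hk : 2 ≤ k) {x y : Fin k → ℂ} (hx : x ≠ 0) (hy : y ≠ 0) :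
    ∃ c < 2 * k - 2, lensForm c x y ≠ 0 := by
  by_contra! h
  have hminor (c : ℕ) : minorSum c x y = 0 := by
    by_contra hc
    obtain ⟨h0, hlt⟩ := lt_of_minorSum_ne_zero hc
    obtain ⟨c, rfl⟩ := Nat.exists_eq_add_one.2 h0
    exact hc (h _ hlt)
  obtain ⟨r, rfl⟩ := exists_eq_smul_of_minorSum_eq_zero hx hminor
  have hr : r ≠ 0 := left_ne_zero_of_smul hy
  have h0 := h 0 (by lia)
  rw [lensForm, star_smul, dotProduct_smul, smul_eq_zero, star_eq_zero,
    dotProduct_self_star_eq_zero] at h0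
  exact h0.elim hr hx

theorem exists_pos_lensForm_eq {u : Fin k → ℝ} (hu : StrictAnti u) (hu0 : ∀ i, 0 < u i) {c : ℕ}
    (hc : c < 2 * k - 2) : ∃ r : ℝ, 0 < r ∧ lensForm c (fun i ↦ (u i : ℂ)) 1 = r := by
  have hk : 0 < k := by lia
  cases c with
  | zero =>
    refine ⟨∑ i, u i, Finset.sum_pos (fun i _ ↦ hu0 i) ⟨⟨0, hk⟩, Finset.mem_univ _⟩, ?_⟩
    simp [lensForm, dotProduct]
  | succ c =>
    refine ⟨∑ ab : Fin k × Fin k with ab.1 < ab.2 ∧ (ab.1 + ab.2 : ℕ) = c + 1,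
      (u ab.1 - u ab.2), Finset.sum_pos (fun ab hab ↦ ?_) ?_, ?_⟩
    · exact sub_pos.2 (hu (Finset.mem_filter_univ _ |>.1 hab).1)
    · refine ⟨(⟨c + 1 - min (c + 1) (k - 1), by lia⟩, ⟨min (c + 1) (k - 1), by lia⟩), ?_⟩
      simp only [Finset.mem_filter_univ, Fin.mk_lt_mk]
      lia
    · simp [lensForm, minorSum, minor]

end LensForm

theorem exists_mul_eq_of_pow_mul_eq_one {G : Type*} [Group G] {p q : ℕ} (hpq : p.Coprime q)
    {x : G} (hx : x ^ (p * q) = 1) : ∃ a b : G, a ^ p = 1 ∧ b ^ q = 1 ∧ a * b = x := by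
  obtain ⟨u, v, huv⟩ := Nat.isCoprime_iff_coprime.2 hpq
  rw [← zpow_natCast, Nat.cast_mul] at hx
  refine ⟨x ^ (q * v : ℤ), x ^ (p * u : ℤ), ?_, ?_, ?_⟩
  · rw [← zpow_natCast, ← zpow_mul, mul_right_comm, mul_comm (q : ℤ), zpow_mul, hx, one_zpow]
  · rw [← zpow_natCast, ← zpow_mul, mul_right_comm, zpow_mul, hx, one_zpow]
  · rw [← zpow_add, mul_comm (q : ℤ), add_comm, mul_comm (p : ℤ), huv, zpow_one]

theorem exists_circle_coe_eq_of_pow_eq_one {n : ℕ} (hn : n ≠ 0) {v : ℂ} (hv : v ^ n = 1) :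
    ∃ ζ : Circle, (ζ : ℂ) = v ∧ ζ ^ n = 1 :=
  ⟨⟨v, mem_sphere_zero_iff_norm.2 (Complex.norm_eq_one_of_pow_eq_one hv hn)⟩, rfl,
    Circle.ext hv⟩

section LensSpace

open Metric

variable {p k : ℕ} {ℓ : Fin k → ℤ}

/-- The unit sphere of `ℂ^k`, of real dimension `2k - 1`. -/
abbrev ComplexSphere (k : ℕ) : Type := sphere (0 : EuclideanSpace ℂ (Fin k)) 1

/-- The weighted action of the circle on the sphere of `ℂ^k`; restricted to `p`-th roots of unity
it is the action whose orbit space is `LensSpace p k ℓ`. -/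
noncomputable def lensRot (ℓ : Fin k → ℤ) (ζ : Circle) (z : ComplexSphere k) : ComplexSphere k :=
  ⟨WithLp.toLp 2 fun j ↦ (ζ : ℂ) ^ ℓ j * z.1 j, by
    have hz := norm_eq_of_mem_sphere z
    rw [EuclideanSpace.norm_eq] at hz
    simpa only [mem_sphere_zero_iff_norm, EuclideanSpace.norm_eq, norm_mul, norm_zpow,
      Circle.norm_coe, one_zpow, one_mul] using hz⟩

theorem lensRot_apply (ℓ : Fin k → ℤ) (ζ : Circle) (z : ComplexSphere k) (j : Fin k) :
    (lensRot ℓ ζ z).1 j = (ζ : ℂ) ^ ℓ j * z.1 j := rfl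

theorem lensRot_one (z : ComplexSphere k) : lensRot ℓ 1 z = z := by
  ext j
  rw [lensRot_apply, Circle.coe_one, one_zpow, one_mul]

theorem lensRot_mul (ζ ξ : Circle) (z : ComplexSphere k) :
    lensRot ℓ (ζ * ξ) z = lensRot ℓ ζ (lensRot ℓ ξ z) := by
  ext j
  simp only [lensRot_apply, Circle.coe_mul, mul_zpow, mul_assoc]

theorem continuous_lensRot (ζ : Circle) : Continuous (lensRot ℓ ζ) :=
  ((PiLp.continuous_toLp 2 _).comp (by fun_prop)).subtype_mk _

theorem lensRel_iff (hp : p ≠ 0) {x y : ComplexSphere k} :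
    lensRel p k ℓ x y ↔ ∃ ζ : Circle, ζ ^ p = 1 ∧ y = lensRot ℓ ζ x := by
  have hω := Complex.isPrimitiveRoot_exp p hp
  set ω := Complex.exp (2 * Real.pi * Complex.I / p)
  have hexp (m : ℤ) (j : Fin k) :
      Complex.exp (2 * Real.pi * Complex.I * m * ℓ j / p) = (ω ^ m) ^ ℓ j := by
    rw [← Complex.exp_int_mul, ← Complex.exp_int_mul]
    congr 1
    ring
  simp only [lensRel, hexp]
  constructor
  · rintro ⟨m, hm⟩
    have hωm : (ω ^ m) ^ p = 1 := by
      rw [← zpow_natCast, ← zpow_mul, mul_comm, zpow_mul, hω.zpow_eq_one, one_zpow]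
    obtain ⟨ζ, hζ, hζp⟩ := exists_circle_coe_eq_of_pow_eq_one hp hωm
    exact ⟨ζ, hζp, Subtype.ext (PiLp.ext fun j ↦ by rw [hm, lensRot_apply, hζ])⟩
  · rintro ⟨ζ, hζ, rfl⟩
    have : NeZero p := ⟨hp⟩
    obtain ⟨m, -, hm⟩ := hω.eq_pow_of_pow_eq_one (congrArg Circle.coeHom hζ)
    exact ⟨m, fun j ↦ by rw [lensRot_apply, zpow_natCast, hm]⟩

theorem equivalence_lensRel (hp : p ≠ 0) : Equivalence (lensRel p k ℓ) where
  refl x := (lensRel_iff hp).2 ⟨1, one_pow p, lensRot_one x |>.symm⟩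
  symm {x y} h := by
    obtain ⟨ζ, hζ, rfl⟩ := (lensRel_iff hp).1 h
    refine (lensRel_iff hp).2 ⟨ζ⁻¹, by rw [inv_pow, hζ, inv_one], ?_⟩
    rw [← lensRot_mul, inv_mul_cancel, lensRot_one]
  trans {x y z} hxy hyz := by
    obtain ⟨ζ, hζ, rfl⟩ := (lensRel_iff hp).1 hxy
    obtain ⟨ξ, hξ, rfl⟩ := (lensRel_iff hp).1 hyz
    exact (lensRel_iff hp).2 ⟨ξ * ζ, by rw [mul_pow, hζ, hξ, one_mul], (lensRot_mul ξ ζ x).symm⟩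

/-- The quotient map from the sphere onto the lens space. -/
def lensMk (p : ℕ) (ℓ : Fin k → ℤ) (z : ComplexSphere k) : LensSpace p k ℓ := Quot.mk _ z

theorem lensMk_eq_lensMk_iff (hp : p ≠ 0) {x y : ComplexSphere k} :
    lensMk p ℓ x = lensMk p ℓ y ↔ ∃ ζ : Circle, ζ ^ p = 1 ∧ y = lensRot ℓ ζ x :=
  ((equivalence_lensRel hp).quot_mk_eq_iff x y).trans (lensRel_iff hp)

theorem isOpenQuotientMap_lensMk (hp : p ≠ 0) : IsOpenQuotientMap (lensMk p ℓ) where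
  surjective := Quot.mk_surjective
  continuous := continuous_quot_mk
  isOpenMap U hU := by
    have hsat : lensMk p ℓ ⁻¹' (lensMk p ℓ '' U) =
        ⋃ ζ : {ζ : Circle // ζ ^ p = 1}, lensRot ℓ ζ ⁻¹' U := by
      ext x
      rw [Set.mem_preimage, Set.mem_iUnion]
      constructor
      · rintro ⟨y, hy, hxy⟩
        obtain ⟨ζ, hζ, rfl⟩ := (lensMk_eq_lensMk_iff hp).1 hxy.symm
        exact ⟨⟨ζ, hζ⟩, hy⟩
      · rintro ⟨⟨ζ, hζ⟩, hx⟩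
        exact ⟨_, hx, ((lensMk_eq_lensMk_iff hp).2 ⟨ζ, hζ, rfl⟩).symm⟩
    refine isQuotientMap_quot_mk.isOpen_preimage.1 ?_
    change IsOpen (lensMk p ℓ ⁻¹' (lensMk p ℓ '' U))
    exact hsat ▸ isOpen_iUnion fun ζ ↦ hU.preimage (continuous_lensRot ζ.1)

/-- A continuous nowhere vanishing map `H` from the sphere to `ℂ^k` that turns the weighted action
of the `p`-th roots of unity into scalar multiplication and meets every positive ray. It
replaces arbitrary weights `ℓ` by the weights `1, …, 1`. -/
structure IsScalarModel (p : ℕ) (ℓ : Fin k → ℤ) (H : ComplexSphere k → Fin k → ℂ) : Prop where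
  continuous : Continuous H
  ne_zero z : H z ≠ 0
  map_lensRot {ζ : Circle} (hζ : ζ ^ p = 1) z : H (lensRot ℓ ζ z) = (ζ : ℂ) • H z
  exists_map_eq_smul {u : Fin k → ℂ} (hu : u ≠ 0) : ∃ z, ∃ r : ℝ, 0 < r ∧ H z = (r : ℂ) • u

theorem IsScalarModel.isLocallyInjective_lensMk {H : ComplexSphere k → Fin k → ℂ}
    (hH : IsScalarModel p ℓ H) (hp : p ≠ 0) : IsLocallyInjective (lensMk p ℓ) := by
  intro z₀
  obtain ⟨j, hj⟩ := Function.ne_iff.1 (hH.ne_zero z₀)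
  have hcont : Continuous fun z ↦ H z j / H z₀ j := by have := hH.continuous; fun_prop
  refine ⟨(fun z ↦ H z j / H z₀ j) ⁻¹' argSector 0 (Real.pi / p),
    (isOpen_argSector ?_).preimage hcont, ?_, fun x hx y hy hxy ↦ ?_⟩
  · rw [zero_add]
    exact div_le_self Real.pi_pos.le (mod_cast Nat.one_le_iff_ne_zero.2 hp)
  · rw [Set.mem_preimage, div_self hj]
    exact ⟨one_ne_zero, by rw [Complex.arg_one, sub_zero, abs_zero]; positivity⟩
  · obtain ⟨ζ, hζ, rfl⟩ := (lensMk_eq_lensMk_iff hp).1 hxy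
    have hζ' : (ζ : ℂ) ^ p = 1 := congrArg Circle.coeHom hζ
    have hval : H (lensRot ℓ ζ x) j / H z₀ j = ζ * (H x j / H z₀ j) := by
      rw [hH.map_lensRot hζ, Pi.smul_apply, smul_eq_mul, mul_div_assoc]
    have heq : H x j / H z₀ j = ζ * (H x j / H z₀ j) :=
      eq_of_pow_eq_of_mem_argSector hp le_rfl hx (hval ▸ hy) (by rw [mul_pow, hζ', one_mul])
    have hζ1 : ζ = 1 := Circle.ext ((right_eq_mul₀ hx.1).1 heq)
    rw [hζ1, lensRot_one]

end LensSpace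

theorem exists_nat_mul_modEq_one {p : ℕ} (hp : p ≠ 0) {l : ℤ} (hl : IsCoprime l (p : ℤ)) :
    ∃ a b : ℕ, a ≠ 0 ∧ a + b = p ∧ l * a ≡ 1 [ZMOD p] := by
  obtain ⟨u, v, huv⟩ := hl
  have hp' : (p : ℤ) ≠ 0 := mod_cast hp
  have hnonneg := Int.emod_nonneg (u - 1) hp'
  have hlt := Int.emod_lt_of_pos (u - 1) (by lia : (0 : ℤ) < p)
  refine ⟨((u - 1) % p).toNat + 1, p - (((u - 1) % p).toNat + 1), by lia, by lia, ?_⟩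
  have hu : (((u - 1) % p).toNat + 1 : ℕ) ≡ u [ZMOD p] := by
    rw [Nat.cast_succ, Int.toNat_of_nonneg hnonneg]
    simpa using (Int.mod_modEq (u - 1) p).add_right 1
  refine (hu.mul_left l).trans (Int.modEq_iff_dvd.2 ⟨v, ?_⟩)
  linear_combination -huv

/-- The map `v ↦ v ^ a ‖v‖ ^ b`: it multiplies arguments by `a` but is homogeneous of degree
`a + b` for positive real scalars. -/
noncomputable def phasePow (a b : ℕ) (v : ℂ) : ℂ := v ^ a * (‖v‖ : ℂ) ^ b

theorem continuous_phasePow (a b : ℕ) : Continuous (phasePow a b) := by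
  unfold phasePow
  fun_prop

theorem phasePow_ne_zero {a b : ℕ} {v : ℂ} (hv : v ≠ 0) : phasePow a b v ≠ 0 :=
  mul_ne_zero (pow_ne_zero a hv) (pow_ne_zero b (mod_cast norm_ne_zero_iff.2 hv))

theorem phasePow_circle_mul (a b : ℕ) (ζ : Circle) (v : ℂ) :
    phasePow a b (ζ * v) = (ζ : ℂ) ^ a * phasePow a b v := by
  rw [phasePow, phasePow, mul_pow, norm_mul, Circle.norm_coe, one_mul, mul_assoc]

theorem phasePow_real_mul (a b : ℕ) {r : ℝ} (hr : 0 ≤ r) (v : ℂ) :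
    phasePow a b (r * v) = (r : ℂ) ^ (a + b) * phasePow a b v := by
  rw [phasePow, phasePow, norm_mul, Complex.norm_of_nonneg hr]
  push_cast
  ring

theorem phasePow_surjective {a : ℕ} (ha : a ≠ 0) (b : ℕ) :
    Function.Surjective (phasePow a b) := by
  intro u
  rcases eq_or_ne u 0 with rfl | hu
  · exact ⟨0, by rw [phasePow, zero_pow ha, zero_mul]⟩
  have hu' : (‖u‖ : ℂ) ≠ 0 := mod_cast norm_ne_zero_iff.2 hu
  obtain ⟨ω, hω⟩ := IsAlgClosed.exists_pow_nat_eq (u / ‖u‖) ha.bot_lt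
  have hωnorm : ‖ω‖ = 1 := by
    rw [← pow_eq_one_iff_of_nonneg (norm_nonneg ω) ha, ← norm_pow, hω, norm_div,
      Complex.norm_real, norm_norm, div_self (norm_ne_zero_iff.2 hu)]
  have hr : (0 : ℝ) ≤ ‖u‖ ^ ((a + b : ℕ) : ℝ)⁻¹ := by positivity
  refine ⟨(‖u‖ ^ ((a + b : ℕ) : ℝ)⁻¹ : ℝ) * ω, ?_⟩
  rw [phasePow_real_mul a b hr, ← Complex.ofReal_pow,
    Real.rpow_inv_natCast_pow (norm_nonneg u) (by lia), phasePow, hωnorm, hω, Complex.ofReal_one,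
    one_pow, mul_one, mul_div_cancel₀ _ hu']

section ScalarModel

variable {p k : ℕ} {ℓ : Fin k → ℤ}

theorem exists_phasePow_eq_smul {a b : Fin k → ℕ} (ha : ∀ j, a j ≠ 0) (hab : ∀ j, a j + b j = p)
    {u : Fin k → ℂ} (hu : u ≠ 0) :
    ∃ z : ComplexSphere k, ∃ r : ℝ, 0 < r ∧
      (fun j ↦ phasePow (a j) (b j) (z.1 j)) = (r : ℂ) • u := by
  choose x hx using fun j ↦ phasePow_surjective (ha j) (b j) (u j)
  have hx0 : WithLp.toLp 2 x ≠ 0 := by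
    rintro h
    refine hu (funext fun j ↦ ?_)
    have hxj : x j = 0 := congrFun (congrArg WithLp.ofLp h) j
    rw [← hx, hxj, phasePow, zero_pow (ha j), zero_mul, Pi.zero_apply]
  have hinv : 0 < ‖WithLp.toLp 2 x‖⁻¹ := inv_pos.2 (norm_pos_iff.2 hx0)
  refine ⟨⟨((‖WithLp.toLp 2 x‖⁻¹ : ℝ) : ℂ) • WithLp.toLp 2 x, ?_⟩, _, pow_pos hinv p,
    funext fun j ↦ ?_⟩
  · rw [mem_sphere_zero_iff_norm, norm_smul, Complex.norm_of_nonneg hinv.le,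
      inv_mul_cancel₀ (norm_ne_zero_iff.2 hx0)]
  · change phasePow (a j) (b j) (_ * x j) = _
    rw [phasePow_real_mul _ _ hinv.le, hx, hab, Complex.ofReal_pow, Pi.smul_apply, smul_eq_mul]

theorem exists_isScalarModel (hp : p ≠ 0) (hℓ : ∀ j, IsCoprime (ℓ j) (p : ℤ)) :
    ∃ H, IsScalarModel p ℓ H := by
  choose a b ha hab hmod using fun j ↦ exists_nat_mul_modEq_one hp (hℓ j)
  refine ⟨fun z j ↦ phasePow (a j) (b j) (z.1 j),
    continuous_pi fun j ↦ (continuous_phasePow _ _).comp (by fun_prop), fun z h ↦ ?_,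
    fun {ζ} hζ z ↦ funext fun j ↦ ?_, exists_phasePow_eq_smul ha hab⟩
  · refine ne_zero_of_mem_unit_sphere z (PiLp.ext fun j ↦ ?_)
    by_contra hz
    exact phasePow_ne_zero hz (congrFun h j)
  · have hpow : (ζ ^ ℓ j) ^ a j = ζ := by
      obtain ⟨m, hm⟩ := (hmod j).symm.dvd
      rw [← zpow_natCast, ← zpow_mul, eq_add_of_sub_eq' hm, zpow_add, zpow_one, zpow_mul,
        zpow_natCast, hζ, one_zpow, mul_one]
    rw [lensRot_apply, ← Circle.coe_zpow, phasePow_circle_mul, ← Circle.coe_pow, hpow]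
    rfl

end ScalarModel

section FormSheet

variable {p q k : ℕ} {ℓ ℓ' : Fin k → ℤ} {H H' : ComplexSphere k → Fin k → ℂ}

/-- The sheet on which the form of index `i.1` takes values in the sector `i.2`; for
`N = p * q` it is mapped injectively to the product of the two lens spaces. -/
def formSheet (N : ℕ) (H H' : ComplexSphere k → Fin k → ℂ) (i : Fin (2 * k - 2) × Bool) :
    Set (ComplexSphere k × ComplexSphere k) :=
  {x | lensForm i.1 (H x.1) (H' x.2) ∈ rootSector N i.2}

theorem continuous_lensForm_comp (hH : Continuous H) (hH' : Continuous H') (c : ℕ) :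
    Continuous fun x : ComplexSphere k × ComplexSphere k ↦ lensForm c (H x.1) (H' x.2) :=
  (continuous_lensForm c).comp (hH.prodMap hH')

theorem isOpen_formSheet (hH : Continuous H) (hH' : Continuous H') {N : ℕ} (hN : 2 ≤ N)
    (i : Fin (2 * k - 2) × Bool) : IsOpen (formSheet N H H' i) :=
  (isOpen_rootSector hN i.2).preimage (continuous_lensForm_comp hH hH' i.1)

theorem lensForm_map_lensRot (hH : IsScalarModel p ℓ H) (hH' : IsScalarModel q ℓ' H') (c : ℕ)
    {ζ ξ : Circle} (hζ : ζ ^ p = 1) (hξ : ξ ^ q = 1) (z w : ComplexSphere k) :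
    lensForm c (H (lensRot ℓ ζ z)) (H' (lensRot ℓ' ξ w)) =
      ζ * formTwist c ξ * lensForm c (H z) (H' w) := by
  rw [hH.map_lensRot hζ, hH'.map_lensRot hξ, lensForm_smul_smul]

theorem formTwist_coe_pow_eq_one (c : ℕ) {ξ : Circle} (hξ : ξ ^ q = 1) :
    (formTwist c ξ) ^ q = 1 := by
  rw [← map_pow, ← Circle.coe_pow, hξ, Circle.coe_one, map_one]

theorem injOn_formSheet (hp : p ≠ 0) (hq : q ≠ 0) (hpq : p.Coprime q)
    (hH : IsScalarModel p ℓ H) (hH' : IsScalarModel q ℓ' H') (i : Fin (2 * k - 2) × Bool) :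
    (formSheet (p * q) H H' i).InjOn (Prod.map (lensMk p ℓ) (lensMk q ℓ')) := by
  rintro ⟨z, w⟩ hx ⟨z', w'⟩ hy hxy
  obtain ⟨hz, hw⟩ := Prod.mk.inj hxy
  obtain ⟨ζ, hζ, rfl⟩ := (lensMk_eq_lensMk_iff hp).1 hz
  obtain ⟨ξ, hξ, rfl⟩ := (lensMk_eq_lensMk_iff hq).1 hw
  have hζ' : (ζ : ℂ) ^ p = 1 := congrArg Circle.coeHom hζ
  have hξ' := formTwist_coe_pow_eq_one i.1 hξ
  have hval := lensForm_map_lensRot hH hH' i.1 hζ hξ z w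
  have heq := eq_of_pow_eq_of_mem_argSector (mul_ne_zero hp hq) le_rfl hx hy <| by
    rw [hval, mul_pow, mul_pow, pow_mul (ζ : ℂ), hζ', mul_comm p, pow_mul (formTwist _ _), hξ',
      one_pow, one_pow, one_mul, one_mul]
  have hprod : ζ * formTwist i.1 ξ = 1 := (right_eq_mul₀ hx.1).1 (heq.trans hval)
  have hζq : (ζ : ℂ) ^ q = 1 := by
    simpa only [mul_pow, hξ', mul_one, one_pow] using congrArg (· ^ q) hprod
  obtain rfl : ζ = 1 := Circle.ext ((pow_eq_one_iff_of_coprime hpq).1 ⟨hζ', hζq⟩)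
  rw [Circle.coe_one, one_mul] at hprod
  obtain rfl : ξ = 1 := Circle.ext (by
    rw [← formTwist_formTwist i.1 (ξ : ℂ), hprod, map_one, Circle.coe_one])
  rw [lensRot_one, lensRot_one]

theorem exists_lensRot_mem_formSheet (hp : p ≠ 0) (hq : q ≠ 0) (hpq : p.Coprime q) (hk : 2 ≤ k)
    (hH : IsScalarModel p ℓ H) (hH' : IsScalarModel q ℓ' H') (z w : ComplexSphere k) :
    ∃ i, ∃ ζ ξ : Circle, ζ ^ p = 1 ∧ ξ ^ q = 1 ∧
      (lensRot ℓ ζ z, lensRot ℓ' ξ w) ∈ formSheet (p * q) H H' i := by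
  obtain ⟨c, hc, hF⟩ := exists_lensForm_ne_zero hk (hH.ne_zero z) (hH'.ne_zero w)
  have hN : p * q ≠ 0 := mul_ne_zero hp hq
  obtain ⟨v, ε, hv, hvε⟩ := exists_pow_eq_pow_mem_rootSector hN hF
  obtain ⟨ρ, hρ, hρN⟩ := exists_circle_coe_eq_of_pow_eq_one hN
    (show (v / lensForm c (H z) (H' w)) ^ (p * q) = 1 by
      rw [div_pow, hv, div_self (pow_ne_zero _ hF)])
  obtain ⟨ζ, η, hζ, hη, rfl⟩ := exists_mul_eq_of_pow_mul_eq_one hpq hρN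
  obtain ⟨ξ, hξ, hξq⟩ := exists_circle_coe_eq_of_pow_eq_one hq (formTwist_coe_pow_eq_one c hη)
  refine ⟨(⟨c, hc⟩, ε), ζ, ξ, hζ, hξq, ?_⟩
  change lensForm c _ _ ∈ rootSector _ _
  rwa [lensForm_map_lensRot hH hH' c hζ hξq, hξ, formTwist_formTwist, ← Circle.coe_mul, hρ,
    div_mul_cancel₀ _ hF]

theorem iUnion_image_formSheet (hp : p ≠ 0) (hq : q ≠ 0) (hpq : p.Coprime q) (hk : 2 ≤ k)
    (hH : IsScalarModel p ℓ H) (hH' : IsScalarModel q ℓ' H') :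
    ⋃ i, Prod.map (lensMk p ℓ) (lensMk q ℓ') '' formSheet (p * q) H H' i = Set.univ := by
  refine Set.eq_univ_of_forall fun x ↦ Set.mem_iUnion.2 ?_
  obtain ⟨⟨z, w⟩, rfl⟩ := ((isOpenQuotientMap_lensMk hp).surjective.prodMap
    (isOpenQuotientMap_lensMk hq).surjective) x
  obtain ⟨i, ζ, ξ, hζ, hξ, hmem⟩ := exists_lensRot_mem_formSheet hp hq hpq hk hH hH' z w
  exact ⟨i, _, hmem, Prod.ext ((lensMk_eq_lensMk_iff hp).2 ⟨ζ, hζ, rfl⟩).symm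
    ((lensMk_eq_lensMk_iff hq).2 ⟨ξ, hξ, rfl⟩).symm⟩

theorem exists_lt_abs_arg_lensForm_pow (hq : q ≠ 0) (hH : IsScalarModel p ℓ H)
    (hH' : IsScalarModel q ℓ' H') (hk : k ≠ 0) :
    ∃ z w, ∀ c < 2 * k - 2,
      3 * Real.pi / 4 < |Complex.arg (lensForm c (H z) (H' w) ^ q)| := by
  have : NeZero k := ⟨hk⟩
  -- Scaling the second point by `η` makes the `q`-th power of every form real and negative.
  obtain ⟨η, hη⟩ := IsAlgClosed.exists_pow_nat_eq (-1 : ℂ) hq.bot_lt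
  have hη0 : η ≠ 0 := by
    rintro rfl
    simp [hq] at hη
  let u (i : Fin k) : ℝ := k - i
  have hu : StrictAnti u := fun i j hij ↦ sub_lt_sub_left (Nat.cast_lt.2 hij) _
  have hu0 (i : Fin k) : 0 < u i := sub_pos.2 (Nat.cast_lt.2 i.2)
  obtain ⟨z, r, hr, hz⟩ := hH.exists_map_eq_smul (u := fun i ↦ (u i : ℂ))
    (Function.ne_iff.2 ⟨0, Complex.ofReal_ne_zero.2 (hu0 0).ne'⟩)
  obtain ⟨w, s, hs, hw⟩ := hH'.exists_map_eq_smul (smul_ne_zero hη0 (one_ne_zero (α := Fin k → ℂ)))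
  refine ⟨z, w, fun c hc ↦ ?_⟩
  obtain ⟨t, ht, htF⟩ := exists_pos_lensForm_eq hu hu0 hc
  have htwist : (formTwist c (s * η)) ^ q = - (s : ℂ) ^ q := by
    have hreal : formTwist c (s : ℂ) = s := by cases c <;> simp [formTwist]
    rw [← map_pow, mul_pow, hη, map_mul, map_pow, hreal, map_neg, map_one, mul_neg_one]
  have hpow : lensForm c (H z) (H' w) ^ q = ((-(r * s * t) ^ q : ℝ) : ℂ) := by
    rw [hz, hw, smul_smul, lensForm_smul_smul, htF, mul_pow, mul_pow, htwist]
    push_cast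
    ring
  rw [hpow, Complex.arg_ofReal_of_neg (neg_neg_of_pos (by positivity)), abs_of_pos Real.pi_pos]
  linarith [Real.pi_pos]

theorem exists_isOpen_forall_notMem_formSheet (hp : 2 ≤ p) (hq : q ≠ 0) (hk : k ≠ 0)
    (hH : IsScalarModel p ℓ H) (hH' : IsScalarModel q ℓ' H') :
    ∃ O O' : Set (ComplexSphere k), IsOpen O ∧ O.Nonempty ∧ O.InjOn (lensMk p ℓ) ∧
      IsOpen O' ∧ O'.Nonempty ∧ O'.InjOn (lensMk q ℓ') ∧
      ∀ i z w w', (z, w) ∈ formSheet (p * q) H H' i → z ∈ O → w' ∈ O' →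
        lensMk q ℓ' w ≠ lensMk q ℓ' w' := by
  obtain ⟨z₀, w₀, hz₀⟩ := exists_lt_abs_arg_lensForm_pow hq hH hH' hk
  have hopen (c : ℕ) : IsOpen {x : ComplexSphere k × ComplexSphere k |
      3 * Real.pi / 4 < |Complex.arg (lensForm c (H x.1) (H' x.2) ^ q)|} :=
    (isOpen_setOf_lt_abs_arg (by positivity)).preimage
      ((continuous_lensForm_comp hH.continuous hH'.continuous c).pow q)
  obtain ⟨U, V, hU, hV, hzU, hwV, hUV⟩ := isOpen_prod_iff.1
    (isOpen_biInter_finset fun c (_ : c ∈ Finset.range (2 * k - 2)) ↦ hopen c) z₀ w₀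
    (Set.mem_iInter₂.2 fun c hc ↦ hz₀ c (Finset.mem_range.1 hc))
  obtain ⟨A, hA, hzA, hAinj⟩ := hH.isLocallyInjective_lensMk (by lia) z₀
  obtain ⟨A', hA', hwA', hAinj'⟩ := hH'.isLocallyInjective_lensMk hq w₀
  refine ⟨U ∩ A, V ∩ A', hU.inter hA, ⟨z₀, hzU, hzA⟩, hAinj.mono Set.inter_subset_right,
    hV.inter hA', ⟨w₀, hwV, hwA'⟩, hAinj'.mono Set.inter_subset_right, ?_⟩
  rintro ⟨c, ε⟩ z w w' hmem hz hw' hww'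
  obtain ⟨ξ, hξ, rfl⟩ := (lensMk_eq_lensMk_iff hq).1 hww'
  have hlt := Set.mem_iInter₂.1 (hUV (Set.mk_mem_prod hz.1 hw'.1)) c (Finset.mem_range.2 c.2)
  have hval := lensForm_map_lensRot hH hH' c (one_pow p) hξ z w
  rw [lensRot_one, Circle.coe_one, one_mul] at hval
  rw [Set.mem_ofPred_eq, hval, mul_pow, formTwist_coe_pow_eq_one c hξ, one_mul] at hlt
  exact hlt.not_ge (abs_arg_pow_le_of_mem_rootSector hp hq hmem)

end FormSheet

theorem lsCat_prod_lensSpace_le_of_odd_general {k : ℕ} (hk : 2 ≤ k) {p q : ℕ} (hp : 2 ≤ p)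
    (hq : q ≠ 0) (hpq : Nat.Coprime p q) {ℓ ℓ' : Fin k → ℤ} (hℓ : ∀ j, IsCoprime (ℓ j) (p : ℤ))
    (hℓ' : ∀ j, IsCoprime (ℓ' j) (q : ℤ)) :
    lsCat (LensSpace p k ℓ × LensSpace q k ℓ') ≤ 4 * k - 4 := by
  have hp0 : p ≠ 0 := by lia
  have hrank : 1 < Module.rank ℝ (EuclideanSpace ℂ (Fin k)) :=
    have : NeZero k := ⟨by lia⟩
    one_lt_rank_real_of_complex _
  obtain ⟨H, hH⟩ := exists_isScalarModel hp0 hℓ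
  obtain ⟨H', hH'⟩ := exists_isScalarModel hq hℓ'
  obtain ⟨O, O', hO, hOne, hOinj, hO', hOne', hOinj', hsep⟩ :=
    exists_isOpen_forall_notMem_formSheet hp hq (by lia) hH hH'
  calc lsCat (LensSpace p k ℓ × LensSpace q k ℓ')
      ≤ Fintype.card (Fin (2 * k - 2) × Bool) :=
        lsCat_prod_le_card isContractibleIn_compl_singleton_sphere
          isContractibleIn_compl_singleton_sphere (isOpenQuotientMap_lensMk hp0)
          (isOpenQuotientMap_lensMk hq) hO (infinite_of_isOpen_sphere hrank hO hOne) hOinj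
          hO' (infinite_of_isOpen_sphere hrank hO' hOne') hOinj'
          (isOpen_formSheet hH.continuous hH'.continuous
            (hp.trans (Nat.le_mul_of_pos_right p hq.bot_lt)))
          (injOn_formSheet hp0 hq hpq hH hH') (iUnion_image_formSheet hp0 hq hpq hk hH hH') hsep
    _ = 4 * k - 4 := by
      rw [Fintype.card_prod, Fintype.card_fin, Fintype.card_bool]
      lia

/-- For odd `n = 2k-1 ≥ 3` and odd relatively prime `p, q ≥ 2`,
`cat (L^n_p × L^n_q) ≤ 2n - 2`. -/
theorem lsCat_prod_lensSpace_le_of_odd (k : ℕ) (hk : 2 ≤ k) (n : ℕ) (hn : n = 2 * k - 1)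
    (p q : ℕ) (hp2 : 2 ≤ p) (hq2 : 2 ≤ q) (hp : Odd p) (hq : Odd q) (hpq : Nat.Coprime p q)
    (ℓ : Fin k → ℤ) (hℓ : ∀ j, IsCoprime (ℓ j) (p : ℤ))
    (ℓ' : Fin k → ℤ) (hℓ' : ∀ j, IsCoprime (ℓ' j) (q : ℤ)) :
    lsCat (LensSpace p k ℓ × LensSpace q k ℓ') ≤ 2 * n - 2 :=
  (lsCat_prod_lensSpace_le_of_odd_general hk hp2 (by lia) hpq hℓ hℓ').trans (by lia)
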